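/- arXiv:2310.20037 — 2 statements merged into one kernel-verified Lean document; each statement's English description precedes it below -/
import Mathlib

section
/- Let X, Y, Z, gλ, uλ be as in the mean field optimization setting, with gλ lower semi-continuous and bounded below, the map x ↦ {gλ(x,y) : y ∈ Z_x} lower semi-continuous, and BRλ(x) nonempty for all x. Then for any Borel probability measure m on X, inf_{μ ∈ 𝒫_m(Z)} ∫_Z gλ dμ = ∫_X uλ dm. -/
open MeasureTheory Filter Topology
open scoped RealInnerProductSpace ENNReal

/-- Capacitability: a continuous surjection from Baire space can be restricted to a compact set
with image of large measure. -/
theorem aux_capacity {X : Type*} [MetricSpace X] [MeasurableSpace X] [BorelSpace X]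
    (m : Measure X) [IsFiniteMeasure m] (p : (ℕ → ℕ) → X) (hp : Continuous p)
    (hs : Function.Surjective p) (a : ℝ≥0∞) (ha : a < m Set.univ) :
    ∃ K : Set (ℕ → ℕ), IsCompact K ∧ a ≤ m (p '' K) := by
  have step : ∀ (T : {T : Set (ℕ → ℕ) // a < m (p '' T)}) (k : ℕ),
      ∃ j : ℕ, a < m (p '' (T.1 ∩ {σ | σ k ≤ j})) := by
    rintro ⟨T, hT⟩ k
    have hmono : Monotone (fun j : ℕ => p '' (T ∩ {σ | σ k ≤ j})) := by
      intro i j hij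
      apply Set.image_mono
      rintro σ ⟨h1, h2⟩
      exact ⟨h1, le_trans h2 hij⟩
    have hU : (⋃ j : ℕ, p '' (T ∩ {σ | σ k ≤ j})) = p '' T := by
      rw [← Set.image_iUnion, ← Set.inter_iUnion]
      congr 1
      apply Set.inter_eq_left.2
      intro σ _
      exact Set.mem_iUnion.2 ⟨σ k, le_refl (σ k)⟩
    rw [← hU, hmono.measure_iUnion, lt_iSup_iff] at hT
    exact hT
  choose j hj using step
  let T : ℕ → {T : Set (ℕ → ℕ) // a < m (p '' T)} := fun k =>
    Nat.rec ⟨Set.univ, by rwa [Set.image_univ, hs.range_eq]⟩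
      (fun k T => ⟨T.1 ∩ {σ | σ k ≤ j T k}, hj T k⟩) k
  let n : ℕ → ℕ := fun k => j (T k) k
  have hTs : ∀ k, (T (k+1)).1 = (T k).1 ∩ {σ | σ k ≤ n k} := fun k => rfl
  have hT : ∀ k, ∀ σ ∈ (T k).1, ∀ i < k, σ i ≤ n i := by
    intro k
    induction k with
    | zero => intro σ _ i hi; omega
    | succ k ih =>
      intro σ hσ i hi
      rw [hTs] at hσ
      rcases Nat.lt_succ_iff_lt_or_eq.1 hi with h | h
      · exact ih σ hσ.1 i h
      · subst h; exact hσ.2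
  have hTanti : Antitone (fun k => (T k).1) := by
    apply antitone_nat_of_succ_le
    intro k
    rw [hTs]
    exact Set.inter_subset_left
  let K : Set (ℕ → ℕ) := Set.pi Set.univ (fun i => Set.Iic (n i))
  have hK : IsCompact K := isCompact_univ_pi (fun i => (Set.finite_Iic (n i)).isCompact)
  refine ⟨K, hK, ?_⟩
  have hsub : (⋂ k, closure (p '' (T k).1)) ⊆ p '' K := by
    intro x hx
    rw [Set.mem_iInter] at hx
    have : ∀ k : ℕ, ∃ σ ∈ (T k).1, dist x (p σ) < 1 / ((k : ℝ) + 1) := by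
      intro k
      obtain ⟨_, ⟨σ, hσ, rfl⟩, h⟩ := Metric.mem_closure_iff.1 (hx k) (1 / ((k : ℝ) + 1))
        (by positivity)
      exact ⟨σ, hσ, h⟩
    choose σ hσ hd using this
    have hτ : ∀ k, (fun i => min (σ k i) (n i)) ∈ K := by
      intro k i _
      exact min_le_right (σ k i) (n i)
    obtain ⟨τ, hτK, φ, hφ, hlim⟩ := hK.tendsto_subseq hτ
    have hlim2 : Tendsto (fun k => σ (φ k)) atTop (𝓝 τ) := by
      rw [tendsto_pi_nhds] at hlim ⊢
      intro i
      refine (hlim i).congr' ?_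
      filter_upwards [eventually_gt_atTop i] with k hk
      have h1 : i < φ k := lt_of_lt_of_le hk (hφ.id_le k)
      exact min_eq_left (hT _ _ (hσ (φ k)) i h1)
    have h1 : Tendsto (fun k => p (σ (φ k))) atTop (𝓝 (p τ)) :=
      (hp.tendsto τ).comp hlim2
    have h2 : Tendsto (fun k => p (σ k)) atTop (𝓝 x) := by
      rw [tendsto_iff_dist_tendsto_zero]
      refine squeeze_zero (fun _ => dist_nonneg) (fun k => ?_)
        tendsto_one_div_add_atTop_nhds_zero_nat
      rw [dist_comm]
      exact (hd k).le
    exact ⟨τ, hτK, tendsto_nhds_unique h1 (h2.comp hφ.tendsto_atTop)⟩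
  refine le_trans ?_ (measure_mono hsub)
  have hanti : Antitone (fun k => closure (p '' (T k).1)) := fun i j hij =>
    closure_mono (Set.image_mono (hTanti hij))
  rw [hanti.measure_iInter (fun k => isClosed_closure.measurableSet.nullMeasurableSet)
    ⟨0, measure_ne_top _ _⟩]
  exact le_iInf (fun k => (T k).2.le.trans (measure_mono subset_closure))

/-- Measurable selection over a compact subset of Baire space. -/
theorem aux_selection {X Y : Type*} [MetricSpace X] [MeasurableSpace X] [BorelSpace X]
    [MetricSpace Y] [MeasurableSpace Y] [BorelSpace Y]
    (f : (ℕ → ℕ) → X × Y) (hf : Continuous f) (K : Set (ℕ → ℕ)) (hK : IsCompact K)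
    (hne : K.Nonempty) :
    ∃ s : X → Y, Measurable s ∧ ∀ x ∈ (fun σ => (f σ).1) '' K, (x, s x) ∈ Set.range f := by
  have : Nonempty K := hne.to_subtype
  have : CompactSpace K := isCompact_iff_compactSpace.1 hK
  let _ : MetricSpace K := TopologicalSpace.metrizableSpaceMetric K
  obtain ⟨e, he, hes⟩ := exists_nat_bool_continuous_surjective_of_compact K
  let θ : cantorSet → X × Y := fun c => f (e (cantorSetHomeomorphNatToBool c))
  have hθ : Continuous θ :=
    hf.comp (continuous_subtype_val.comp (he.comp cantorSetHomeomorphNatToBool.continuous))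
  have : CompactSpace cantorSet := isCompact_iff_compactSpace.1 isCompact_cantorSet
  let q : cantorSet → X := fun c => (θ c).1
  have hq : Continuous q := continuous_fst.comp hθ
  let F : X → Set ℝ := fun x => Subtype.val '' (q ⁻¹' {x})
  have hF : ∀ x, IsCompact (F x) := fun x =>
    ((isClosed_singleton.preimage hq).isCompact).image continuous_subtype_val
  let t : X → ℝ := fun x => sInf (F x)
  have htF : ∀ x, (F x).Nonempty → t x ∈ F x := fun x h => (hF x).sInf_mem h
  have htC : ∀ x, t x ∈ cantorSet := by
    intro x
    rcases (F x).eq_empty_or_nonempty with h | h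
    · have : t x = 0 := by simp [t, h]
      rw [this]; exact zero_mem_cantorSet
    · obtain ⟨c, _, hc⟩ := htF x h
      rw [← hc]; exact c.2
  have htm : Measurable t := by
    apply measurable_of_Iic
    intro a
    have h1 : MeasurableSet (q '' {c | (c : ℝ) ≤ a}) :=
      (((isClosed_Iic.preimage continuous_subtype_val : IsClosed
        {c : cantorSet | (c : ℝ) ≤ a}).isCompact).image hq).isClosed.measurableSet
    have h2 : MeasurableSet (Set.range q) := (isCompact_range hq).isClosed.measurableSet
    have h3 : t ⁻¹' Set.Iic a =
        q '' {c | (c : ℝ) ≤ a} ∪ ((Set.range q)ᶜ ∩ {_x | (0 : ℝ) ≤ a}) := by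
      ext x
      constructor
      · intro hx
        rcases (F x).eq_empty_or_nonempty with h | h
        · right
          have h0 : t x = 0 := by simp [t, h]
          refine ⟨?_, ?_⟩
          · rintro ⟨c, hc⟩
            have : (c : ℝ) ∈ F x := ⟨c, hc, rfl⟩
            rw [h] at this
            exact this
          · have : t x ≤ a := hx
            rw [h0] at this
            exact this
        · left
          obtain ⟨c, hc, hct⟩ := htF x h
          refine ⟨c, ?_, hc⟩
          change (c : ℝ) ≤ a
          rw [hct]; exact hx
      · rintro (⟨c, hc, rfl⟩ | ⟨h1, h2⟩)
        · exact (csInf_le (hF _).bddBelow ⟨c, rfl, rfl⟩).trans hc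
        · have : F x = ∅ := by
            apply Set.eq_empty_of_forall_notMem
            rintro _ ⟨c, hc, rfl⟩
            exact h1 ⟨c, hc⟩
          have h0 : t x = 0 := by simp [t, this]
          change t x ≤ a
          rw [h0]; exact h2
    rw [h3]
    exact h1.union (h2.compl.inter (MeasurableSet.const _))
  refine ⟨fun x => (θ ⟨t x, htC x⟩).2, ?_, ?_⟩
  · exact (continuous_snd.comp hθ).measurable.comp (htm.subtype_mk)
  · rintro x ⟨σ, hσ, rfl⟩
    obtain ⟨b, hb⟩ := hes ⟨σ, hσ⟩
    have hne : (F (f σ).1).Nonempty := by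
      refine ⟨_, cantorSetHomeomorphNatToBool.symm b, ?_, rfl⟩
      simp [q, θ, hb]
    obtain ⟨c, hc, hct⟩ := htF _ hne
    have hc' : (⟨t (f σ).1, htC _⟩ : cantorSet) = c := Subtype.ext hct.symm
    change ((f σ).1, (θ ⟨t (f σ).1, htC _⟩).2) ∈ _
    rw [hc']
    have hc2 : (θ c).1 = (f σ).1 := hc
    rw [← hc2]
    exact ⟨_, rfl⟩

/-- A.e. measurable selection (von Neumann–Aumann). -/
theorem aux_ae_selection {X Y : Type*}
    [MetricSpace X] [CompleteSpace X] [SecondCountableTopology X]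
    [MeasurableSpace X] [BorelSpace X]
    [MetricSpace Y] [CompleteSpace Y] [SecondCountableTopology Y]
    [MeasurableSpace Y] [BorelSpace Y]
    (m : Measure X) [IsProbabilityMeasure m] (S : Set (X × Y)) (hS : MeasurableSet S)
    (hne : ∀ x, ∃ y, (x, y) ∈ S) :
    ∃ s : X → Y, Measurable s ∧ ∀ᵐ x ∂m, (x, s x) ∈ S := by
  classical
  obtain ⟨x0⟩ : Nonempty X := m.nonempty_of_neZero
  have hSa := hS.analyticSet
  rw [AnalyticSet] at hSa
  rcases hSa with h | ⟨f, hf, hfS⟩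
  · obtain ⟨y, hy⟩ := hne x0
    rw [h] at hy
    exact hy.elim
  have hsurj : Function.Surjective (fun σ => (f σ).1) := by
    intro x
    obtain ⟨y, hy⟩ := hne x
    rw [← hfS] at hy
    obtain ⟨σ, hσ⟩ := hy
    exact ⟨σ, by simp [hσ]⟩
  have hfc : Continuous (fun σ => (f σ).1) := continuous_fst.comp hf
  have key : ∀ n : ℕ, ∃ (B : Set X) (s : X → Y), MeasurableSet B ∧ Measurable s ∧
      (∀ x ∈ B, (x, s x) ∈ S) ∧ m Bᶜ ≤ ((n : ℝ≥0∞) + 2)⁻¹ := by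
    intro n
    have hlt1 : ((n : ℝ≥0∞) + 2)⁻¹ < 1 := by
      rw [ENNReal.inv_lt_one]
      calc (1 : ℝ≥0∞) < 2 := by norm_num
        _ ≤ _ := le_add_self
    have hpos : ((n : ℝ≥0∞) + 2)⁻¹ ≠ 0 := by
      rw [ENNReal.inv_ne_zero]
      exact ENNReal.add_ne_top.2 ⟨ENNReal.natCast_ne_top n, by norm_num⟩
    obtain ⟨K, hK, hmK⟩ := aux_capacity m _ hfc hsurj (1 - ((n : ℝ≥0∞) + 2)⁻¹) (by
      rw [measure_univ]
      exact ENNReal.sub_lt_self (by norm_num) (by norm_num) hpos)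
    have hKne : K.Nonempty := by
      by_contra h
      rw [Set.not_nonempty_iff_eq_empty] at h
      rw [h] at hmK
      simp only [Set.image_empty, measure_empty, nonpos_iff_eq_zero] at hmK
      exact absurd (tsub_eq_zero_iff_le.1 hmK) (not_le.2 hlt1)
    obtain ⟨s, hs, hsK⟩ := aux_selection f hf K hK hKne
    have hBm : MeasurableSet ((fun σ => (f σ).1) '' K) := (hK.image hfc).isClosed.measurableSet
    refine ⟨_, s, hBm, hs, fun x hx => hfS ▸ hsK x hx, ?_⟩
    rw [prob_compl_eq_one_sub hBm]
    rw [tsub_le_iff_left] at hmK ⊢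
    rwa [add_comm]
  choose B s hB hs hBS hmB using key
  let U : Set X := ⋃ n, B n
  have hU : MeasurableSet U := MeasurableSet.iUnion hB
  have hUc : m Uᶜ = 0 := by
    have h1 : ∀ n : ℕ, m Uᶜ ≤ ((n : ℝ≥0∞))⁻¹ := fun n =>
      (measure_mono (Set.compl_subset_compl.2 (Set.subset_iUnion B n))).trans
        ((hmB n).trans (ENNReal.inv_le_inv.2 le_self_add))
    exact le_antisymm (ge_of_tendsto' ENNReal.tendsto_inv_nat_nhds_zero h1) zero_le
  have hex : ∀ x, ∃ n, x ∈ B n ∨ x ∈ Uᶜ := by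
    intro x
    by_cases hx : x ∈ U
    · obtain ⟨n, hn⟩ := Set.mem_iUnion.1 hx
      exact ⟨n, Or.inl hn⟩
    · exact ⟨0, Or.inr hx⟩
  refine ⟨fun x => s (Nat.find (hex x)) x, Measurable.find (p := fun n x => x ∈ B n ∨ x ∈ Uᶜ) hs
    (fun n => (hB n).union hU.compl) hex, ?_⟩
  have : ∀ᵐ x ∂m, x ∈ U := hUc
  filter_upwards [this] with x hx
  rcases Nat.find_spec (hex x) with h | h
  · exact hBS _ x h
  · exact (h hx).elim

/-- For any Borel probability marginal `m`, the infimum of `∫ gλ dμ` over probability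
measures on `Z` with first marginal `m` equals `∫ uλ dm`, where
`uλ(x) = inf_{y ∈ Z_x} ⟨λ, g(x,y)⟩`. -/
theorem stmt_8 {X Y H : Type*}
    [MetricSpace X] [CompleteSpace X] [SecondCountableTopology X]
    [MeasurableSpace X] [BorelSpace X]
    [MetricSpace Y] [CompleteSpace Y] [SecondCountableTopology Y]
    [MeasurableSpace Y] [BorelSpace Y]
    [NormedAddCommGroup H] [InnerProductSpace ℝ H]
    [MeasurableSpace H] [BorelSpace H]
    (Z : Set (X × Y)) (hZc : IsClosed Z) (hZne : ∀ x : X, ∃ y, (x, y) ∈ Z)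
    (g : X × Y → H) (hgm : Measurable g) (M : ℝ) (hM : ∀ z, ‖g z‖ ≤ M)
    (lam : H)
    (hlsc : LowerSemicontinuousOn (fun z => ⟪lam, g z⟫) Z)
    (hG : ∀ x y, (x, y) ∈ Z → ∀ xn : ℕ → X, Tendsto xn atTop (𝓝 x) →
      ∃ yn : ℕ → Y, (∀ n, (xn n, yn n) ∈ Z) ∧
        Tendsto (fun n => ⟪lam, g (xn n, yn n)⟫) atTop (𝓝 ⟪lam, g (x, y)⟫))
    (hBR : ∀ x : X, ∃ y, (x, y) ∈ Z ∧
      ∀ y', (x, y') ∈ Z → ⟪lam, g (x, y)⟫ ≤ ⟪lam, g (x, y')⟫)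
    (u : X → ℝ) (hu : ∀ x, u x = sInf {r | ∃ y, (x, y) ∈ Z ∧ r = ⟪lam, g (x, y)⟫})
    (m : Measure X) [IsProbabilityMeasure m]
    (A : Set (Measure (X × Y)))
    (hA : A = {μ | IsProbabilityMeasure μ ∧ μ Zᶜ = 0 ∧ μ.map Prod.fst = m}) :
    sInf ((fun μ => ∫ z, ⟪lam, g z⟫ ∂μ) '' A) = ∫ x, u x ∂m := by
  set f : X × Y → ℝ := fun z => ⟪lam, g z⟫ with hf
  have hfm : Measurable f := (continuous_const.inner continuous_id).measurable.comp hgm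
  have hfb : ∀ z, ‖f z‖ ≤ ‖lam‖ * M := fun z =>
    (norm_inner_le_norm _ _).trans (mul_le_mul_of_nonneg_left (hM z) (norm_nonneg _))
  have hul : ∀ x y, (x, y) ∈ Z → u x ≤ f (x, y) := by
    intro x y hy
    rw [hu]
    refine csInf_le ⟨-(‖lam‖ * M), ?_⟩ ⟨y, hy, rfl⟩
    rintro r ⟨y', _, rfl⟩
    exact (abs_le.1 (hfb (x, y'))).1
  have hub : ∀ x, ∃ y, (x, y) ∈ Z ∧ f (x, y) ≤ u x := by
    intro x
    obtain ⟨y, hy, hmin⟩ := hBR x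
    refine ⟨y, hy, ?_⟩
    rw [hu]
    refine le_csInf ⟨_, y, hy, rfl⟩ ?_
    rintro r ⟨y', hy', rfl⟩
    exact hmin y' hy'
  have hum : Measurable u := by
    apply measurable_of_Ici
    intro a
    apply IsClosed.measurableSet
    apply IsSeqClosed.isClosed
    intro xn x hxn hlim
    obtain ⟨y, hy, hyu⟩ := hub x
    obtain ⟨yn, hyn, hyl⟩ := hG x y hy xn hlim
    exact (ge_of_tendsto' hyl (fun n => le_trans (hxn n) (hul _ _ (hyn n)))).trans hyu
  have hubd : ∀ x, ‖u x‖ ≤ ‖lam‖ * M := by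
    intro x
    obtain ⟨y, hy, hyu⟩ := hub x
    rw [le_antisymm (hul x y hy) hyu]
    exact hfb _
  have hSm : MeasurableSet (Z ∩ {z | f z ≤ u z.1}) :=
    hZc.measurableSet.inter (measurableSet_le hfm (hum.comp measurable_fst))
  obtain ⟨s, hs, hsS⟩ := aux_ae_selection m _ hSm hub
  have hgr : Measurable (fun x => (x, s x)) := measurable_id.prodMk hs
  apply IsLeast.csInf_eq
  constructor
  · refine ⟨m.map (fun x => (x, s x)), ?_, ?_⟩
    · rw [hA]
      refine ⟨Measure.isProbabilityMeasure_map hgr.aemeasurable, ?_, ?_⟩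
      · rw [Measure.map_apply hgr hZc.measurableSet.compl]
        have : ∀ᵐ x ∂m, (x, s x) ∈ Z := hsS.mono fun x hx => hx.1
        exact this
      · rw [Measure.map_map measurable_fst hgr]
        exact Measure.map_id
    · change ∫ z, f z ∂(m.map (fun x => (x, s x))) = _
      rw [integral_map hgr.aemeasurable hfm.aestronglyMeasurable]
      apply integral_congr_ae
      filter_upwards [hsS] with x hx
      exact le_antisymm hx.2 (hul _ _ hx.1)
  · rintro _ ⟨μ, hμ, rfl⟩
    rw [hA] at hμ
    obtain ⟨hμp, hμZ, hμm⟩ := hμ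
    change _ ≤ ∫ z, f z ∂μ
    rw [← hμm, integral_map measurable_fst.aemeasurable hum.aestronglyMeasurable]
    apply integral_mono_ae
    · exact Integrable.of_bound (hum.comp measurable_fst).aestronglyMeasurable (‖lam‖ * M)
        (Eventually.of_forall fun z => hubd z.1)
    · exact Integrable.of_bound hfm.aestronglyMeasurable (‖lam‖ * M)
        (Eventually.of_forall hfb)
    · have : ∀ᵐ z ∂μ, z ∈ Z := hμZ
      filter_upwards [this] with z hz
      exact hul z.1 z.2 hz
end

section
/- Under the same assumptions, let V(m) = inf_{μ ∈ 𝒫_m(Z)} f(∫_Z g dμ) denote the value function. Then for all m₀, m₁ ∈ 𝒫¹(X): |V(m₀) − V(m₁)| ≤ L_g (C + L M) d₁(m₀, m₁), where d₁ is the Kantorovich–Rubinstein distance. -/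
open MeasureTheory
open scoped RealInnerProductSpace ENNReal NNReal

/-- Fibrewise argmin of `ψ` over the sections of `A`. -/
def argminSet {E Y : Type*} (A : Set (E × Y)) (ψ : E × Y → ℝ) : Set (E × Y) :=
  {z | z ∈ A ∧ ∀ y, (z.1, y) ∈ A → ψ z ≤ ψ (z.1, y)}

/-- Compact sections, and measurable lower inverses of closed sets. -/
def GoodSet {E Y : Type*} [TopologicalSpace E] [TopologicalSpace Y] [MeasurableSpace E]
    (A : Set (E × Y)) : Prop :=
  (∀ x, IsCompact {y | (x, y) ∈ A}) ∧
    ∀ G : Set (E × Y), IsClosed G → MeasurableSet {x | ∃ y, (x, y) ∈ A ∧ (x, y) ∈ G}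

lemma argmin_exists {E Y : Type*} [TopologicalSpace E] [TopologicalSpace Y] [MeasurableSpace E]
    {A : Set (E × Y)} (hA : GoodSet A) {ψ : E × Y → ℝ} (hψ : Continuous ψ) {x : E}
    (hx : ∃ y, (x, y) ∈ A) : ∃ y, (x, y) ∈ argminSet A ψ := by
  obtain ⟨y, hy, hmin⟩ := (hA.1 x).exists_isMinOn hx
    (f := fun y => ψ (x, y)) (by fun_prop)
  exact ⟨y, hy, fun y' hy' => hmin hy'⟩

lemma goodSet_argmin {E Y : Type*} [TopologicalSpace E] [TopologicalSpace Y] [T2Space Y]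
    [MeasurableSpace E]
    {A : Set (E × Y)} (hA : GoodSet A) {ψ : E × Y → ℝ} (hψ : Continuous ψ) :
    GoodSet (argminSet A ψ) := by
  constructor
  · intro x
    have : {y | (x, y) ∈ argminSet A ψ} =
        {y | (x, y) ∈ A} ∩ ⋂ y' ∈ {y | (x, y) ∈ A}, {y | ψ (x, y) ≤ ψ (x, y')} := by
      ext y; simp [argminSet]
    rw [this]
    refine (hA.1 x).inter_right ?_
    refine isClosed_biInter fun y' _ => isClosed_le (by fun_prop) (by fun_prop)
  · intro G hG
    have key : {x | ∃ y, (x, y) ∈ argminSet A ψ ∧ (x, y) ∈ G} =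
        {x | ∃ y, (x, y) ∈ A ∧ (x, y) ∈ (Set.univ : Set (E × Y))} ∩
        ⋂ c : ℚ, ({x | ∃ y, (x, y) ∈ A ∧ (x, y) ∈ {z | ψ z ≤ (c : ℝ)}}ᶜ ∪
          {x | ∃ y, (x, y) ∈ A ∧ (x, y) ∈ G ∩ {z | ψ z ≤ (c : ℝ)}}) := by
      ext x
      simp only [Set.mem_ofPred_eq, Set.mem_inter_iff, Set.mem_iInter, Set.mem_union,
        Set.mem_compl_iff, Set.mem_univ, and_true]
      constructor
      · rintro ⟨y, ⟨hyA, hmin⟩, hyG⟩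
        refine ⟨⟨y, hyA⟩, fun c => ?_⟩
        by_cases h : ∃ y, (x, y) ∈ A ∧ ψ (x, y) ≤ (c : ℝ)
        · right
          obtain ⟨y', hy', hc⟩ := h
          exact ⟨y, hyA, hyG, (hmin y' hy').trans hc⟩
        · left; exact h
      · rintro ⟨hne, hall⟩
        obtain ⟨y0, hy0, hmin0⟩ := argmin_exists hA hψ hne
        have hQ : ∀ c : ℚ, ψ (x, y0) ≤ c → ∃ y, (x, y) ∈ A ∧ (x, y) ∈ G ∧ ψ (x, y) ≤ (c : ℝ) := by
          intro c hc
          rcases hall c with h | h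
          · exact absurd ⟨y0, hy0, hc⟩ h
          · exact h
        have hcomp : IsCompact ({y | (x, y) ∈ A} ∩ {y | (x, y) ∈ G}) :=
          (hA.1 x).inter_right (hG.preimage (by fun_prop : Continuous fun y : Y => (x, y)))
        have hne' : ({y | (x, y) ∈ A} ∩ {y | (x, y) ∈ G}).Nonempty := by
          obtain ⟨c, hc⟩ := exists_rat_gt (ψ (x, y0))
          obtain ⟨y, h1, h2, _⟩ := hQ c hc.le
          exact ⟨y, h1, h2⟩
        obtain ⟨y1, hy1, hmin1⟩ := hcomp.exists_isMinOn hne'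
          (f := fun y => ψ (x, y)) (by fun_prop)
        refine ⟨y1, ⟨hy1.1, fun y hy => ?_⟩, hy1.2⟩
        refine le_trans ?_ (hmin0 y hy)
        by_contra hlt
        push Not at hlt
        obtain ⟨c, hc1, hc2⟩ := exists_rat_btwn hlt
        obtain ⟨y, h1, h2, h3⟩ := hQ c hc1.le
        have : ψ (x, y1) ≤ ψ (x, y) := hmin1 ⟨h1, h2⟩
        linarith
    rw [key]
    refine (hA.2 _ isClosed_univ).inter (MeasurableSet.iInter fun c => ?_)
    have hcl : IsClosed {z : E × Y | ψ z ≤ (c : ℝ)} := isClosed_le hψ continuous_const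
    exact (hA.2 _ hcl).compl.union (hA.2 _ (hG.inter hcl))

/-- Iterated argmin. -/
def iterSet {E Y : Type*} (A : Set (E × Y)) (ψ : ℕ → E × Y → ℝ) : ℕ → Set (E × Y)
  | 0 => A
  | n + 1 => argminSet (iterSet A ψ n) (ψ n)

lemma exists_selection {E Y : Type*} [TopologicalSpace E] [MeasurableSpace E]
    [MetricSpace Y] [SecondCountableTopology Y] [MeasurableSpace Y] [BorelSpace Y] [Nonempty Y]
    {A : Set (E × Y)} (hA : GoodSet A) {ψ : E × Y → ℝ} (hψ : Continuous ψ) :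
    ∃ s : E → Y, Measurable s ∧ ∀ x, (∃ y, (x, y) ∈ A) → (x, s x) ∈ argminSet A ψ := by
  classical
  set d := TopologicalSpace.denseSeq Y with hd
  let Ψ : ℕ → E × Y → ℝ := fun n z => dist z.2 (d n)
  set B := argminSet A ψ with hB
  have hBg : GoodSet B := goodSet_argmin hA hψ
  have hI : ∀ n, GoodSet (iterSet B Ψ n) := by
    intro n
    induction n with
    | zero => exact hBg
    | succ n ih => exact goodSet_argmin ih (by fun_prop)
  have hsub : ∀ n, iterSet B Ψ (n + 1) ⊆ iterSet B Ψ n := fun n z hz => hz.1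
  have hne : ∀ x, (∃ y, (x, y) ∈ A) → ∀ n, ∃ y, (x, y) ∈ iterSet B Ψ n := by
    intro x hx n
    induction n with
    | zero => exact argmin_exists hA hψ hx
    | succ n ih => exact argmin_exists (hI n) (by fun_prop) ih
  have huniq : ∀ x y y', (∀ n, (x, y) ∈ iterSet B Ψ n) → (∀ n, (x, y') ∈ iterSet B Ψ n) →
      y = y' := by
    intro x y y' h h'
    have hdist : ∀ n, dist y (d n) = dist y' (d n) := fun n =>
      le_antisymm ((h (n + 1)).2 y' (h' n)) ((h' (n + 1)).2 y (h n))
    have hfun : (fun w => dist y w) = fun w => dist y' w :=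
      Continuous.ext_on (TopologicalSpace.denseRange_denseSeq Y) (by fun_prop) (by fun_prop)
        (by rintro _ ⟨n, rfl⟩; exact hdist n)
    have := congrFun hfun y'
    simpa using this
  have hex : ∀ x (F : Set Y), IsClosed F →
      (∀ n, ∃ y, (x, y) ∈ iterSet B Ψ n ∧ y ∈ F) → ∃ y ∈ F, ∀ n, (x, y) ∈ iterSet B Ψ n := by
    intro x F hF h
    obtain ⟨y, hy⟩ := IsCompact.nonempty_iInter_of_sequence_nonempty_isCompact_isClosed
      (fun n => {y | (x, y) ∈ iterSet B Ψ n} ∩ F)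
      (fun n y hy => ⟨hsub n hy.1, hy.2⟩) (fun n => h n)
      (((hI 0).1 x).inter_right hF) (fun n => ((hI n).1 x).isClosed.inter hF)
    rw [Set.mem_iInter] at hy
    exact ⟨y, (hy 0).2, fun n => (hy n).1⟩
  have hs : ∀ x, ∃ y, (∃ y, (x, y) ∈ A) → ∀ n, (x, y) ∈ iterSet B Ψ n := by
    intro x
    by_cases hx : ∃ y, (x, y) ∈ A
    · obtain ⟨y, -, hy⟩ := hex x Set.univ isClosed_univ
        (fun n => (hne x hx n).imp fun y hy => ⟨hy, trivial⟩)
      exact ⟨y, fun _ => hy⟩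
    · exact ⟨Classical.arbitrary Y, fun h => absurd h hx⟩
  choose s0 hs0 using hs
  have hDm : MeasurableSet {x | ∃ y, (x, y) ∈ A} := by
    simpa using hA.2 _ isClosed_univ
  let s : E → Y := fun x => if ∃ y, (x, y) ∈ A then s0 x else Classical.arbitrary Y
  refine ⟨s, ?_, ?_⟩
  · refine measurable_of_isClosed fun F hF => ?_
    have : s ⁻¹' F = ({x | ∃ y, (x, y) ∈ A} ∩
        ⋂ n, {x | ∃ y, (x, y) ∈ iterSet B Ψ n ∧ (x, y) ∈ Prod.snd ⁻¹' F}) ∪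
        ({x | ∃ y, (x, y) ∈ A}ᶜ ∩ {_x | Classical.arbitrary Y ∈ F}) := by
      ext x
      by_cases hx : ∃ y, (x, y) ∈ A
      · have hsx : s x = s0 x := if_pos hx
        simp only [Set.mem_preimage, hsx, Set.mem_union, Set.mem_inter_iff, Set.mem_ofPred_eq, hx,
          Set.mem_compl_iff, Set.mem_iInter, true_and, not_true, false_and, or_false]
        constructor
        · intro h n
          exact ⟨s0 x, hs0 x hx n, h⟩
        · intro h
          obtain ⟨y, hyF, hy⟩ := hex x F hF h
          rwa [huniq x (s0 x) y (hs0 x hx) hy]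
      · have hsx : s x = Classical.arbitrary Y := if_neg hx
        simp only [Set.mem_preimage, hsx, Set.mem_union, Set.mem_inter_iff, Set.mem_ofPred_eq, hx,
          Set.mem_compl_iff, false_and, not_false_eq_true, true_and, false_or]
    rw [this]
    refine (hDm.inter (MeasurableSet.iInter fun n => (hI n).2 _ (hF.preimage continuous_snd))).union
      (hDm.compl.inter (MeasurableSet.const _))
  · intro x hx
    have hsx : s x = s0 x := if_pos hx
    rw [hsx]
    exact hs0 x hx 0

lemma goodSet_of_usc {E Y : Type*} [PseudoMetricSpace E] [MeasurableSpace E] [BorelSpace E]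
    [TopologicalSpace Y] {X : Set E} (hX : IsClosed X)
    {Z : Set (E × Y)} (hZX : ∀ z ∈ Z, z.1 ∈ X)
    (hsec : ∀ x ∈ X, IsCompact {y | (x, y) ∈ Z} ∧ {y | (x, y) ∈ Z}.Nonempty)
    (husc : ∀ x ∈ X, ∀ U : Set Y, IsOpen U → {y | (x, y) ∈ Z} ⊆ U →
      ∃ η > (0 : ℝ), ∀ x' ∈ X, dist x x' < η → {y | (x', y) ∈ Z} ⊆ U) : GoodSet Z := by
  constructor
  · intro x
    by_cases hx : x ∈ X
    · exact (hsec x hx).1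
    · have : {y | (x, y) ∈ Z} = ∅ := by
        ext y
        simp only [Set.mem_ofPred_eq, Set.mem_empty_iff_false, iff_false]
        exact fun h => hx (hZX _ h)
      rw [this]; exact isCompact_empty
  · intro G hG
    refine IsClosed.measurableSet ?_
    rw [← isOpen_compl_iff, isOpen_iff_mem_nhds]
    intro x hx
    by_cases hxX : x ∈ X
    · obtain ⟨u, v, hu, hv, hxu, hZv, huv⟩ := generalized_tube_lemma (isCompact_singleton (x := x))
        (hsec x hxX).1 hG.isOpen_compl (by
          rintro ⟨a, b⟩ ⟨ha, hb⟩ hab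
          simp only [Set.mem_singleton_iff] at ha
          subst ha
          exact hx ⟨b, hb, hab⟩)
      obtain ⟨η, hη, h⟩ := husc x hxX v hv hZv
      filter_upwards [hu.mem_nhds (hxu rfl), Metric.ball_mem_nhds x hη] with x' hx'u hx'
      rintro ⟨y, hyZ, hyG⟩
      have : y ∈ v := h x' (hZX _ hyZ) (by rw [dist_comm]; exact hx') hyZ
      exact huv (⟨hx'u, this⟩ : (x', y) ∈ u ×ˢ v) hyG
    · filter_upwards [hX.isOpen_compl.mem_nhds hxX] with x' hx'
      rintro ⟨y, hyZ, -⟩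
      exact hx' (hZX _ hyZ)

lemma convex_grad_ineq {H : Type*} [NormedAddCommGroup H] [InnerProductSpace ℝ H] [CompleteSpace H]
    {f : H → ℝ} {f' : H → H} (hconv : ConvexOn ℝ Set.univ f)
    (hdiff : ∀ x, HasGradientAt f (f' x) x) (x y : H) :
    f x + ⟪f' x, y - x⟫ ≤ f y := by
  have hc : ConvexOn ℝ Set.univ (fun t : ℝ => f (AffineMap.lineMap x y t)) := by
    exact hconv.comp_affineMap (AffineMap.lineMap x y : ℝ →ᵃ[ℝ] H)
  have hd : HasDerivAt (fun t : ℝ => f (AffineMap.lineMap x y t)) ⟪f' x, y - x⟫ 0 := by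
    have h1 : HasDerivAt (AffineMap.lineMap x y : ℝ → H) (y - x) 0 := AffineMap.hasDerivAt_lineMap
    have h2 := (hdiff x).hasFDerivAt
    have h3 : HasFDerivAt f ((InnerProductSpace.toDual ℝ H) (f' x))
      ((AffineMap.lineMap x y : ℝ → H) 0) := by simpa using h2
    have h4 := h3.comp_hasDerivAt (0 : ℝ) h1
    rw [InnerProductSpace.toDual_apply_apply] at h4
    exact h4
  have := hc.le_slope_of_hasDerivAt (Set.mem_univ 0) (Set.mem_univ 1) one_pos hd
  simp [slope_def_field] at this
  linarith

lemma one_sided {E Y H : Type*}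
    [NormedAddCommGroup E] [MeasurableSpace E] [BorelSpace E] [SecondCountableTopology E]
    [MetricSpace Y] [SecondCountableTopology Y]
    [MeasurableSpace Y] [BorelSpace Y]
    [NormedAddCommGroup H] [InnerProductSpace ℝ H] [CompleteSpace H]
    [SecondCountableTopology H] [MeasurableSpace H] [BorelSpace H]
    (X : Set E) (Z : Set (E × Y)) (hZm : MeasurableSet Z) (hZg : GoodSet Z)
    (hZX : ∀ z ∈ Z, z.1 ∈ X)
    (hsec : ∀ x ∈ X, ∃ y, (x, y) ∈ Z)
    (g : E × Y → H) (hgc : Continuous g) (M : ℝ) (hM : ∀ z, ‖g z‖ ≤ M)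
    (f : H → ℝ) (f' : H → H)
    (hconv : ConvexOn ℝ Set.univ f)
    (hdiff : ∀ x, HasGradientAt f (f' x) x) (hf'c : Continuous f')
    (Lg C : ℝ) (hLg : 0 ≤ Lg)
    (hlip : ∀ x₁ ∈ X, ∀ x₂ ∈ X, ∀ y₁, (x₁, y₁) ∈ Z →
      ∃ y₂, (x₂, y₂) ∈ Z ∧ ‖g (x₂, y₂) - g (x₁, y₁)‖ ≤ Lg * dist x₁ x₂)
    (hC : ∀ μ : Measure (E × Y), IsProbabilityMeasure μ → μ Zᶜ = 0 →
      ‖f' (∫ z, g z ∂μ)‖ ≤ C)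
    (m0 m1 : Measure E) [IsProbabilityMeasure m0] [IsProbabilityMeasure m1]
    (hm0X : m0 Xᶜ = 0) (hm1X : m1 Xᶜ = 0)
    (D : ℝ) (hD0 : 0 ≤ D)
    (hD : ∀ (K : ℝ≥0) (F : E → ℝ), LipschitzWith K F → ∫ x, F x ∂m1 - ∫ x, F x ∂m0 ≤ K * D) :
    0 ≤ C ∧ sInf ((fun μ => f (∫ z, g z ∂μ)) ''
      {μ : Measure (E × Y) | IsProbabilityMeasure μ ∧ μ Zᶜ = 0 ∧ μ.map Prod.fst = m1}) ≤
      sInf ((fun μ => f (∫ z, g z ∂μ)) ''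
      {μ : Measure (E × Y) | IsProbabilityMeasure μ ∧ μ Zᶜ = 0 ∧ μ.map Prod.fst = m0})
      + C * (Lg * D) := by
  have haeX : ∀ m : Measure E, m Xᶜ = 0 → ∀ᵐ x ∂m, x ∈ X := fun m hm => hm
  have hXne : ∃ x, x ∈ X := (haeX m0 hm0X).exists
  have hYne : Nonempty Y := by
    obtain ⟨x, hx⟩ := hXne; obtain ⟨y, _⟩ := hsec x hx; exact ⟨y⟩
  have hint : ∀ μ : Measure (E × Y), IsProbabilityMeasure μ → Integrable g μ := fun μ _ =>
    Integrable.of_bound hgc.aestronglyMeasurable M (Filter.Eventually.of_forall hM)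
  -- the measure built from a selection
  have hsel : ∀ s : E → Y, Measurable s → (∀ x ∈ X, (x, s x) ∈ Z) → ∀ m : Measure E,
      IsProbabilityMeasure m → m Xᶜ = 0 →
      (m.map fun x => (x, s x)) ∈ {μ : Measure (E × Y) | IsProbabilityMeasure μ ∧ μ Zᶜ = 0 ∧
        μ.map Prod.fst = m} := by
    intro s hs hsZ m _ hm
    have hms : Measurable fun x => (x, s x) := measurable_id.prodMk hs
    refine ⟨Measure.isProbabilityMeasure_map hms.aemeasurable, ?_, ?_⟩
    · rw [Measure.map_apply hms hZm.compl]
      refine measure_mono_null ?_ hm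
      intro x hx hxX
      exact hx (hsZ x hxX)
    · rw [Measure.map_map measurable_fst hms]
      exact Measure.map_id
  have hne : ∀ m : Measure E, IsProbabilityMeasure m → m Xᶜ = 0 →
      {μ : Measure (E × Y) | IsProbabilityMeasure μ ∧ μ Zᶜ = 0 ∧ μ.map Prod.fst = m}.Nonempty := by
    intro m _ hm
    obtain ⟨s, hs, hsA⟩ := exists_selection hZg (continuous_const (y := (0 : ℝ)))
    exact ⟨_, hsel s hs (fun x hx => (hsA x (hsec x hx)).1) m inferInstance hm⟩
  set P1 := {μ : Measure (E × Y) | IsProbabilityMeasure μ ∧ μ Zᶜ = 0 ∧ μ.map Prod.fst = m1} with hP1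
  have hC0 : 0 ≤ C := by
    obtain ⟨μ, h1, h2, _⟩ := hne m0 inferInstance hm0X
    exact (norm_nonneg _).trans (hC μ h1 h2)
  refine ⟨hC0, ?_⟩
  rw [← sub_le_iff_le_add]
  refine le_csInf ((hne m0 inferInstance hm0X).image _) ?_
  rintro _ ⟨μ0, ⟨hμ0p, hμ0Z, hμ0m⟩, rfl⟩
  simp only
  rw [sub_le_iff_le_add]
  set h0 := ∫ z, g z ∂μ0 with hh0
  set K1 : Set H := (fun μ => ∫ z, g z ∂μ) '' P1 with hK1
  have hK1ne : K1.Nonempty := (hne m1 inferInstance hm1X).image _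
  have hK1conv : Convex ℝ K1 := by
    rintro _ ⟨μ, ⟨hμ1, hμ2, hμ3⟩, rfl⟩ _ ⟨ν, ⟨hν1, hν2, hν3⟩, rfl⟩ a b ha hb hab
    have hab' : ENNReal.ofReal a + ENNReal.ofReal b = 1 := by
      rw [← ENNReal.ofReal_add ha hb, hab, ENNReal.ofReal_one]
    refine ⟨ENNReal.ofReal a • μ + ENNReal.ofReal b • ν, ⟨⟨?_⟩, ?_, ?_⟩, ?_⟩
    · simp [hab']
    · simp [hμ2, hν2]
    · rw [Measure.map_add _ _ measurable_fst, Measure.map_smul, Measure.map_smul, hμ3, hν3,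
        ← add_smul, hab', one_smul]
    · simp only
      rw [integral_add_measure ((hint μ hμ1).smul_measure ENNReal.ofReal_ne_top)
        ((hint ν hν1).smul_measure ENNReal.ofReal_ne_top), integral_smul_measure,
        integral_smul_measure, ENNReal.toReal_ofReal ha, ENNReal.toReal_ofReal hb]
  obtain ⟨q, hqK, hq⟩ := exists_norm_eq_iInf_of_complete_convex hK1ne.closure
    isClosed_closure.isComplete hK1conv.closure h0
  rw [norm_eq_iInf_iff_real_inner_le_zero hK1conv.closure hqK] at hq
  set p := q - h0 with hp
  have hpK : ∀ k ∈ K1, ‖p‖ ^ 2 ≤ ⟪p, k⟫ - ⟪p, h0⟫ := by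
    intro k hk
    have h1 := hq k (subset_closure hk)
    have h2 : h0 - q = -p := by rw [hp]; abel
    rw [h2, inner_neg_left] at h1
    have h3 : k - q = k - h0 - p := by rw [hp]; abel
    rw [h3, inner_sub_right, real_inner_self_eq_norm_sq, inner_sub_right] at h1
    linarith
  -- Lipschitz value function
  obtain ⟨s, hs, hsA⟩ := exists_selection hZg (ψ := fun z => ⟪p, g z⟫) (by fun_prop)
  have hsZ : ∀ x ∈ X, (x, s x) ∈ Z := fun x hx => (hsA x (hsec x hx)).1
  have hsmin : ∀ x ∈ X, ∀ y, (x, y) ∈ Z → ⟪p, g (x, s x)⟫ ≤ ⟪p, g (x, y)⟫ :=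
    fun x hx y hy => (hsA x (hsec x hx)).2 y hy
  let K : ℝ≥0 := ⟨‖p‖ * Lg, by positivity⟩
  have hφ : LipschitzOnWith K (fun x => ⟪p, g (x, s x)⟫) X := by
    refine LipschitzOnWith.of_le_add_mul K ?_
    intro x hx x' hx'
    obtain ⟨y, hyZ, hy⟩ := hlip x' hx' x hx (s x') (hsZ x' hx')
    have h1 := hsmin x hx y hyZ
    have h2 : ⟪p, g (x, y)⟫ - ⟪p, g (x', s x')⟫ ≤ ‖p‖ * (Lg * dist x' x) := by
      rw [← inner_sub_right]
      exact (real_inner_le_norm _ _).trans (mul_le_mul_of_nonneg_left hy (norm_nonneg _))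
    rw [dist_comm] at h2
    change _ ≤ _ + ‖p‖ * Lg * dist x x'
    linarith
  obtain ⟨F, hF, hFX⟩ := hφ.extend_real
  have hk1 : ⟪p, ∫ z, g z ∂(m1.map fun x => (x, s x))⟫ = ∫ x, F x ∂m1 := by
    have hmem := hsel s hs hsZ m1 inferInstance hm1X
    rw [← integral_inner (hint _ hmem.1), integral_map (φ := fun x => (x, s x))
      (measurable_id.prodMk hs).aemeasurable
      (continuous_const.inner hgc).aestronglyMeasurable]
    refine integral_congr_ae ?_
    filter_upwards [haeX m1 hm1X] with x hx
    exact hFX hx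
  have hk0 : ∫ x, F x ∂m0 ≤ ⟪p, h0⟫ := by
    have haeZ : ∀ᵐ z ∂μ0, z ∈ Z := hμ0Z
    rw [hh0, ← integral_inner (hint _ hμ0p), ← hμ0m, integral_map measurable_fst.aemeasurable
      hF.continuous.aestronglyMeasurable]
    refine integral_mono_ae ?_ ((hint _ hμ0p).const_inner p) ?_
    · refine Integrable.of_bound (hF.continuous.comp continuous_fst).aestronglyMeasurable
        (‖p‖ * M) ?_
      filter_upwards [haeZ] with z hz
      rw [← hFX (hZX z hz)]
      exact (norm_inner_le_norm _ _).trans (mul_le_mul_of_nonneg_left (hM _) (norm_nonneg _))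
    · filter_upwards [haeZ] with z hz
      rw [← hFX (hZX z hz)]
      exact hsmin z.1 (hZX z hz) z.2 hz
  have hpD : ‖p‖ ≤ Lg * D := by
    have h1 := hpK _ ⟨_, hsel s hs hsZ m1 inferInstance hm1X, rfl⟩
    simp only at h1
    rw [hk1] at h1
    have h2 : _ ≤ ‖p‖ * Lg * D := hD K F hF
    have h3 : ‖p‖ * ‖p‖ ≤ ‖p‖ * (Lg * D) := by nlinarith
    rcases (norm_nonneg p).eq_or_lt with h | h
    · rw [← h]; positivity
    · exact le_of_mul_le_mul_left h3 h
  have hfc : Continuous f :=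
    continuous_iff_continuousAt.2 fun x => (hdiff x).hasFDerivAt.continuousAt
  have hqC : ‖f' q‖ ≤ C := by
    have : closure K1 ⊆ {h | ‖f' h‖ ≤ C} := by
      refine closure_minimal ?_ (isClosed_le (by fun_prop) continuous_const)
      rintro _ ⟨μ, hμ, rfl⟩
      exact hC μ hμ.1 hμ.2.1
    exact this hqK
  have hqV : sInf ((fun μ => f (∫ z, g z ∂μ)) '' P1) ≤ f q := by
    have : closure K1 ⊆ {h | sInf ((fun μ => f (∫ z, g z ∂μ)) '' P1) ≤ f h} := by
      refine closure_minimal ?_ (isClosed_le continuous_const hfc)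
      rintro _ ⟨μ, hμ, rfl⟩
      refine csInf_le ?_ (Set.mem_image_of_mem (fun μ => f (∫ z, g z ∂μ)) hμ)
      refine ⟨f 0 - ‖f' 0‖ * M, ?_⟩
      rintro _ ⟨ν, hν, rfl⟩
      have h1 := convex_grad_ineq hconv hdiff 0 (∫ z, g z ∂ν)
      rw [sub_zero] at h1
      have hνp := hν.1
      have h2 : ‖∫ z, g z ∂ν‖ ≤ M := by
        simpa using norm_integral_le_of_norm_le_const (μ := ν) (Filter.Eventually.of_forall hM)
      have h3 := (abs_le.1 (abs_real_inner_le_norm (f' 0) (∫ z, g z ∂ν))).1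
      have h4 := mul_le_mul_of_nonneg_left h2 (norm_nonneg (f' 0))
      simp only
      linarith
    exact this hqK
  have h1 := convex_grad_ineq hconv hdiff q h0
  have h2 : h0 - q = -p := by rw [hp]; abel
  rw [h2, inner_neg_right] at h1
  have h3 := real_inner_le_norm (f' q) p
  have h4 : ‖f' q‖ * ‖p‖ ≤ C * (Lg * D) := mul_le_mul hqC hpD (norm_nonneg _) hC0
  linarith

/-- Lipschitz stability of the value function of the MFO problem with respect to the
marginal, for the Kantorovich–Rubinstein distance:
`|V(m₀) − V(m₁)| ≤ L_g (C + L M) d₁(m₀, m₁)`. -/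
theorem stmt_13 {E Y H : Type*}
    [NormedAddCommGroup E] [NormedSpace ℝ E] [CompleteSpace E]
    [SecondCountableTopology E] [MeasurableSpace E] [BorelSpace E]
    [MetricSpace Y] [CompleteSpace Y] [SecondCountableTopology Y]
    [MeasurableSpace Y] [BorelSpace Y]
    [NormedAddCommGroup H] [InnerProductSpace ℝ H] [CompleteSpace H]
    [SecondCountableTopology H] [MeasurableSpace H] [BorelSpace H]
    (X : Set E) (hX : IsClosed X)
    (Z : Set (E × Y)) (hZc : IsClosed Z) (hZX : ∀ z ∈ Z, z.1 ∈ X)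
    (hsec : ∀ x ∈ X, IsCompact {y | (x, y) ∈ Z} ∧ {y | (x, y) ∈ Z}.Nonempty)
    (husc : ∀ x ∈ X, ∀ U : Set Y, IsOpen U → {y | (x, y) ∈ Z} ⊆ U →
      ∃ η > (0 : ℝ), ∀ x' ∈ X, dist x x' < η → {y | (x', y) ∈ Z} ⊆ U)
    (g : E × Y → H) (hgc : Continuous g) (M : ℝ) (hM : ∀ z, ‖g z‖ ≤ M)
    (f : H → ℝ) (f' : H → H)
    (hconv : ConvexOn ℝ Set.univ f)
    (hdiff : ∀ x, HasGradientAt f (f' x) x)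
    (L : ℝ≥0) (hlipf : LipschitzWith L f')
    (Lg C : ℝ) (hLg : 0 ≤ Lg)
    (hlip : ∀ x₁ ∈ X, ∀ x₂ ∈ X, ∀ y₁, (x₁, y₁) ∈ Z →
      ∃ y₂, (x₂, y₂) ∈ Z ∧ ‖g (x₂, y₂) - g (x₁, y₁)‖ ≤ Lg * dist x₁ x₂)
    (hC : ∀ μ : Measure (E × Y), IsProbabilityMeasure μ → μ Zᶜ = 0 →
      ‖f' (∫ z, g z ∂μ)‖ ≤ C)
    (m0 m1 : Measure E) [IsProbabilityMeasure m0] [IsProbabilityMeasure m1]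
    (hm0X : m0 Xᶜ = 0) (hm1X : m1 Xᶜ = 0)
    (hm0 : ∃ x₀ : E, Integrable (fun x => dist x x₀) m0)
    (hm1 : ∃ x₀ : E, Integrable (fun x => dist x x₀) m1)
    (V : Measure E → ℝ)
    (hV : ∀ m : Measure E, V m = sInf ((fun μ => f (∫ z, g z ∂μ)) ''
      {μ : Measure (E × Y) | IsProbabilityMeasure μ ∧ μ Zᶜ = 0 ∧ μ.map Prod.fst = m}))
    (d1 : ℝ)
    (hd1 : d1 = sSup {r | ∃ F : E → ℝ, LipschitzWith 1 F ∧
      r = ∫ x, F x ∂m0 - ∫ x, F x ∂m1}) :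
    |V m0 - V m1| ≤ Lg * (C + (L : ℝ) * M) * d1 := by
  have hZg := goodSet_of_usc hX hZX hsec husc
  have hintF : ∀ m : Measure E, IsProbabilityMeasure m →
      (∃ x₀ : E, Integrable (fun x => dist x x₀) m) → ∀ F : E → ℝ, LipschitzWith 1 F →
      Integrable F m := by
    rintro m _ ⟨x₀, hx₀⟩ F hF
    refine Integrable.mono' (hx₀.add (integrable_const |F x₀|)) hF.continuous.aestronglyMeasurable
      (Filter.Eventually.of_forall fun x => ?_)
    have h := hF.dist_le_mul x x₀
    simp only [NNReal.coe_one, one_mul, Real.dist_eq] at h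
    have h2 := abs_add_le (F x - F x₀) (F x₀)
    rw [sub_add_cancel] at h2
    simp only [Real.norm_eq_abs, Pi.add_apply]
    linarith
  have hbdd : BddAbove {r | ∃ F : E → ℝ, LipschitzWith 1 F ∧
      r = ∫ x, F x ∂m0 - ∫ x, F x ∂m1} := by
    obtain ⟨a, ha⟩ := hm0
    obtain ⟨b, hb⟩ := hm1
    refine ⟨∫ x, dist x a ∂m0 + ∫ x, dist x b ∂m1 + dist a b, ?_⟩
    rintro _ ⟨F, hF, rfl⟩
    have hF0 := hintF m0 inferInstance ⟨a, ha⟩ F hF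
    have hF1 := hintF m1 inferInstance ⟨b, hb⟩ F hF
    have hl : ∀ x y, F x ≤ F y + dist x y := fun x y => by
      simpa using hF.le_add_mul x y
    have h0 : ∫ x, F x ∂m0 ≤ F a + ∫ x, dist x a ∂m0 := by
      have := integral_mono hF0 ((integrable_const (F a)).add ha) (fun x => hl x a)
      rw [integral_add' (integrable_const _) ha] at this
      simpa using this
    have h1 : F b ≤ ∫ x, F x ∂m1 + ∫ x, dist x b ∂m1 := by
      have := integral_mono (integrable_const (F b)) (hF1.add hb)
        (fun x => by simpa [dist_comm] using hl b x)
      rw [integral_add' hF1 hb] at this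
      simpa using this
    linarith [hl a b]
  have hd0 : 0 ≤ d1 := by
    rw [hd1]
    exact le_csSup hbdd ⟨fun _ => 0, LipschitzWith.const' 0, by simp⟩
  have hKR : ∀ (K : ℝ≥0) (F : E → ℝ), LipschitzWith K F →
      ∫ x, F x ∂m0 - ∫ x, F x ∂m1 ≤ K * d1 := by
    intro K F hF
    by_cases hK : K = 0
    · subst hK
      have hc : F = fun _ => F 0 := by
        funext x
        have := hF.dist_le_mul x 0
        simp only [NNReal.coe_zero, zero_mul] at this
        exact dist_le_zero.1 this
      rw [hc]; simp
    · have hKpos : (0 : ℝ) < K := by positivity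
      have h1 : LipschitzWith 1 (fun x => (K : ℝ)⁻¹ * F x) := by
        refine LipschitzWith.of_dist_le_mul fun x y => ?_
        have := hF.dist_le_mul x y
        rw [Real.dist_eq] at this ⊢
        rw [← mul_sub, abs_mul, abs_of_pos (inv_pos.2 hKpos), NNReal.coe_one, one_mul,
          inv_mul_le_iff₀ hKpos]
        exact this
      have h2 : (K : ℝ)⁻¹ * (∫ x, F x ∂m0 - ∫ x, F x ∂m1) ≤ d1 := by
        rw [hd1]
        exact le_csSup hbdd ⟨_, h1, by rw [integral_const_mul, integral_const_mul, mul_sub]⟩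
      rwa [inv_mul_le_iff₀ hKpos] at h2
  have hKR' : ∀ (K : ℝ≥0) (F : E → ℝ), LipschitzWith K F →
      ∫ x, F x ∂m1 - ∫ x, F x ∂m0 ≤ K * d1 := by
    intro K F hF
    have := hKR K (fun x => - F x) hF.neg
    rw [integral_neg, integral_neg] at this
    linarith
  have hsec' : ∀ x ∈ X, ∃ y, (x, y) ∈ Z := fun x hx => (hsec x hx).2
  obtain ⟨hC0, hA⟩ := one_sided X Z hZc.measurableSet hZg hZX hsec' g hgc M hM f f' hconv hdiff
    hlipf.continuous Lg C hLg hlip hC m0 m1 hm0X hm1X d1 hd0 hKR'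
  obtain ⟨-, hB⟩ := one_sided X Z hZc.measurableSet hZg hZX hsec' g hgc M hM f f' hconv hdiff
    hlipf.continuous Lg C hLg hlip hC m1 m0 hm1X hm0X d1 hd0 hKR
  rw [← hV, ← hV] at hA hB
  have hM0 : 0 ≤ M := by
    have haeX : ∀ᵐ x ∂m0, x ∈ X := hm0X
    obtain ⟨x, hx⟩ := haeX.exists
    obtain ⟨y, _⟩ := hsec' x hx
    exact (norm_nonneg _).trans (hM (x, y))
  have hfin : C * (Lg * d1) ≤ Lg * (C + (L : ℝ) * M) * d1 := by
    have : 0 ≤ Lg * ((L : ℝ) * M) * d1 := by positivity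
    nlinarith
  rw [abs_le]
  constructor <;> linarith
end
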